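/- Let D be the m×m difference matrix (D_{ii}=1, D_{i+1,i}=-1, zeros elsewhere). For every j ∈ {1,...,m}, the j-th largest singular value of D^{-1} satisfies (1/π)·((m+1/2)/(j-1/2)) ≤ σ_j(D^{-1}) ≤ (1/2)·((m+1/2)/(j-1/2)). -/

import Mathlib

/-- The m×m lower bidiagonal difference matrix. -/
def Dmat (m : ℕ) : Matrix (Fin m) (Fin m) ℝ :=
  Matrix.of fun i j => if i = j then 1 else if (i : ℕ) = (j : ℕ) + 1 then -1 else 0

/-- The j-th largest singular value of a rectangular matrix, via the
Courant–Fischer max-min characterization. -/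
noncomputable def singVal {m k : ℕ} (A : Matrix (Fin m) (Fin k) ℝ) (j : ℕ) : ℝ :=
  ⨆ W : {W : Submodule ℝ (EuclideanSpace ℝ (Fin k)) // Module.finrank ℝ W = j},
    ⨅ v : {v : EuclideanSpace ℝ (Fin k) // v ∈ W.1 ∧ ‖v‖ = 1},
      ‖Matrix.toEuclideanLin A v.1‖


/-!
Put `φₖ = (2k + 1)π / (2(2m + 1))` for `k < m`, and let `sₖ`, `cₖ` be the vectors with entries
`sin (2(i + 1)φₖ)` and `cos ((2i + 1)φₖ)`. Since `sin 0 = 0` and `cos ((2m + 1)φₖ) = 0`, the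
sum-to-product formulas give `D sₖ = 2 sin φₖ • cₖ` and `Dᵀ cₖ = 2 sin φₖ • sₖ`. Hence `cₖ` is an
eigenvector of `(D⁻¹)ᵀ D⁻¹` for `(2 sin φₖ)⁻²`, and as these `m` numbers are distinct they are all
the eigenvalues: the singular values of `D⁻¹` are the `(2 sin φₖ)⁻¹`. The bounds are
`2φ / π ≤ sin φ ≤ φ` on `[0, π / 2]`.
-/

open Module Matrix
open scoped InnerProductSpace

section SingularValues

variable {𝕜 E F : Type*} [RCLike 𝕜]
  [NormedAddCommGroup E] [InnerProductSpace 𝕜 E]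
  [NormedAddCommGroup F] [InnerProductSpace 𝕜 F]

theorem exists_mem_norm_eq_one_forall_inner_eq_zero {ι : Type*} [Fintype ι] (f : ι → E)
    {W : Submodule 𝕜 E} (hW : Fintype.card ι < finrank 𝕜 W) :
    ∃ v ∈ W, ‖v‖ = 1 ∧ ∀ i, ⟪f i, v⟫_𝕜 = 0 := by
  have : FiniteDimensional 𝕜 W := FiniteDimensional.of_finrank_pos (Nat.zero_lt_of_lt hW)
  let L : W →ₗ[𝕜] ι → 𝕜 := LinearMap.pi fun i => (innerₛₗ 𝕜 (f i)).domRestrict W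
  have ker_ne_bot : LinearMap.ker L ≠ ⊥ := LinearMap.ker_ne_bot_of_finrank_lt (by simpa using hW)
  obtain ⟨w, hw, w_ne⟩ := Submodule.exists_mem_ne_zero_of_ne_bot ker_ne_bot
  refine ⟨(‖(w : E)‖⁻¹ : 𝕜) • (w : E), W.smul_mem _ w.2, norm_smul_inv_norm (by simpa using w_ne),
    fun i => ?_⟩
  have inner_w : ⟪f i, (w : E)⟫_𝕜 = 0 := congrFun (LinearMap.mem_ker.1 hw) i
  rw [inner_smul_right, inner_w, mul_zero]

variable [FiniteDimensional 𝕜 E]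

theorem eigenvalues_eq_of_strictAnti {T : E →ₗ[𝕜] E} (hT : T.IsSymmetric) {n : ℕ}
    (hn : finrank 𝕜 E = n) {μ : Fin n → ℝ} (hμ : StrictAnti μ)
    (hasEigenvalue : ∀ k, End.HasEigenvalue T (μ k : 𝕜)) : hT.eigenvalues hn = μ := by
  choose p hp using fun k => hT.exists_eigenvalues_eq hn (hasEigenvalue k)
  have comp_eq : hT.eigenvalues hn ∘ p = μ := funext fun k => RCLike.ofReal_injective (hp k)
  have p_surjective : Function.Surjective p :=
    Finite.surjective_of_injective (Function.Injective.of_comp (comp_eq ▸ hμ.injective))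
  have eigenvalues_injective : Function.Injective (hT.eigenvalues hn) :=
    Function.Injective.of_comp_right (comp_eq ▸ hμ.injective) p_surjective
  have eigenvalues_strictAnti : StrictAnti (hT.eigenvalues hn) :=
    (hT.eigenvalues_antitone hn).strictAnti_of_injective eigenvalues_injective
  refine (StrictAnti.range_inj eigenvalues_strictAnti hμ).1 ?_
  rw [← comp_eq, p_surjective.range_comp]

variable [FiniteDimensional 𝕜 F] (T : E →ₗ[𝕜] F)

theorem singularValues_eq_of_strictAnti {n : ℕ} (hn : finrank 𝕜 E = n) {σ : Fin n → ℝ}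
    (hσ : StrictAnti σ) (σ_nonneg : ∀ k, 0 ≤ σ k) {v : Fin n → E} {w : Fin n → F}
    (v_ne : ∀ k, v k ≠ 0) (apply_v : ∀ k, T (v k) = (σ k : 𝕜) • w k)
    (adjoint_apply_w : ∀ k, LinearMap.adjoint T (w k) = (σ k : 𝕜) • v k) (k : Fin n) :
    T.singularValues k = σ k := by
  have sq_strictAnti : StrictAnti fun k => σ k ^ 2 := fun k l hkl =>
    pow_lt_pow_left₀ (hσ hkl) (σ_nonneg l) two_ne_zero
  have hasEigenvalue (k) :
      End.HasEigenvalue (LinearMap.adjoint T ∘ₗ T) ((σ k ^ 2 : ℝ) : 𝕜) := by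
    refine End.hasEigenvalue_of_hasEigenvector (End.hasEigenvector_iff.2
      ⟨End.mem_eigenspace_iff.2 ?_, v_ne k⟩)
    rw [LinearMap.comp_apply, apply_v, map_smul, adjoint_apply_w, smul_smul, RCLike.ofReal_pow, sq]
  rw [T.singularValues_fin hn,
    eigenvalues_eq_of_strictAnti T.isSymmetric_adjoint_comp_self hn sq_strictAnti hasEigenvalue,
    Real.sqrt_sq (σ_nonneg k)]

/-- An orthonormal basis of right singular vectors of `T`, i.e. of eigenvectors of `T† T`, the
`i`-th of which belongs to `T.singularValues i`. -/
noncomputable def rightSingularBasis : OrthonormalBasis (Fin (finrank 𝕜 E)) 𝕜 E :=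
  T.isSymmetric_adjoint_comp_self.eigenvectorBasis rfl

theorem inner_rightSingularBasis_adjoint_apply (i : Fin (finrank 𝕜 E)) (v : E) :
    ⟪rightSingularBasis T i, LinearMap.adjoint T (T v)⟫_𝕜 =
      ((T.singularValues i ^ 2 : ℝ) : 𝕜) * ⟪rightSingularBasis T i, v⟫_𝕜 := by
  have gram_apply : (LinearMap.adjoint T ∘ₗ T) (rightSingularBasis T i) =
      ((T.singularValues i ^ 2 : ℝ) : 𝕜) • rightSingularBasis T i := by
    rw [rightSingularBasis, LinearMap.IsSymmetric.apply_eigenvectorBasis,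
      T.sq_singularValues_fin rfl]
  rw [← LinearMap.comp_apply, ← T.isSymmetric_adjoint_comp_self, gram_apply, inner_smul_left,
    RCLike.conj_ofReal]

theorem norm_apply_sq_eq_sum_singularValues (v : E) :
    ‖T v‖ ^ 2 =
      ∑ i : Fin (finrank 𝕜 E), T.singularValues i ^ 2 * ‖⟪rightSingularBasis T i, v⟫_𝕜‖ ^ 2 := by
  apply RCLike.ofReal_injective (K := 𝕜)
  rw [RCLike.ofReal_pow, ← inner_self_eq_norm_sq_to_K, ← LinearMap.adjoint_inner_right,
    ← (rightSingularBasis T).sum_inner_mul_inner, RCLike.ofReal_sum]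
  refine Finset.sum_congr rfl fun i _ => ?_
  rw [inner_rightSingularBasis_adjoint_apply, mul_left_comm, ← inner_conj_symm v, RCLike.conj_mul,
    RCLike.ofReal_mul, RCLike.ofReal_pow ‖_‖]

theorem singularValues_mul_norm_sq_eq_sum (j : ℕ) (v : E) :
    (T.singularValues j * ‖v‖) ^ 2 =
      ∑ i : Fin (finrank 𝕜 E), T.singularValues j ^ 2 * ‖⟪rightSingularBasis T i, v⟫_𝕜‖ ^ 2 := by
  rw [mul_pow, ← (rightSingularBasis T).sum_sq_norm_inner_right v, Finset.mul_sum]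

theorem norm_apply_le_singularValues_mul_norm {j : ℕ} {v : E}
    (hv : ∀ i : Fin (finrank 𝕜 E), i < j → ⟪rightSingularBasis T i, v⟫_𝕜 = 0) :
    ‖T v‖ ≤ T.singularValues j * ‖v‖ := by
  refine le_of_sq_le_sq ?_ (mul_nonneg (T.singularValues_nonneg j) (norm_nonneg v))
  rw [norm_apply_sq_eq_sum_singularValues, singularValues_mul_norm_sq_eq_sum]
  refine Finset.sum_le_sum fun i _ => ?_
  rcases lt_or_ge (i : ℕ) j with hij | hji
  · simp [hv i hij]
  · gcongr
    exacts [T.singularValues_nonneg i, T.singularValues_antitone hji]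

theorem singularValues_mul_norm_le_norm_apply {j : ℕ} {v : E}
    (hv : ∀ i : Fin (finrank 𝕜 E), j < i → ⟪rightSingularBasis T i, v⟫_𝕜 = 0) :
    T.singularValues j * ‖v‖ ≤ ‖T v‖ := by
  refine le_of_sq_le_sq ?_ (norm_nonneg (T v))
  rw [norm_apply_sq_eq_sum_singularValues, singularValues_mul_norm_sq_eq_sum]
  refine Finset.sum_le_sum fun i _ => ?_
  rcases lt_or_ge j (i : ℕ) with hji | hij
  · simp [hv i hji]
  · gcongr
    exacts [T.singularValues_nonneg j, T.singularValues_antitone hij]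

theorem exists_mem_norm_eq_one_norm_apply_le_singularValues {j : ℕ} {W : Submodule 𝕜 E}
    (hW : j < finrank 𝕜 W) : ∃ v ∈ W, ‖v‖ = 1 ∧ ‖T v‖ ≤ T.singularValues j := by
  have hj : j ≤ finrank 𝕜 E := hW.le.trans W.finrank_le
  obtain ⟨v, hvW, norm_v, inner_v⟩ := exists_mem_norm_eq_one_forall_inner_eq_zero
    (fun i : Fin j => rightSingularBasis T (i.castLE hj)) (W := W) (by simpa using hW)
  refine ⟨v, hvW, norm_v, ?_⟩
  simpa [norm_v] using norm_apply_le_singularValues_mul_norm T fun i hi => inner_v ⟨i, hi⟩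

theorem exists_finrank_eq_forall_singularValues_mul_norm_le {j : ℕ} (hj : j < finrank 𝕜 E) :
    ∃ W : Submodule 𝕜 E, finrank 𝕜 W = j + 1 ∧
      ∀ v ∈ W, T.singularValues j * ‖v‖ ≤ ‖T v‖ := by
  set b := rightSingularBasis T
  have inclusion_injective : Function.Injective (Fin.castLE (Nat.succ_le_of_lt hj)) :=
    Fin.castLE_injective _
  refine ⟨Submodule.span 𝕜 (Set.range (b ∘ Fin.castLE (Nat.succ_le_of_lt hj))), ?_,
    fun v hv => singularValues_mul_norm_le_norm_apply T fun i hji => ?_⟩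
  · rw [finrank_span_eq_card (b.orthonormal.comp _ inclusion_injective).linearIndependent,
      Fintype.card_fin]
  · have span_le_ker : Submodule.span 𝕜 (Set.range (b ∘ Fin.castLE (Nat.succ_le_of_lt hj))) ≤
        LinearMap.ker (innerₛₗ 𝕜 (b i)) := by
      rw [Submodule.span_le]
      rintro _ ⟨l, rfl⟩
      exact b.orthonormal.2 (Fin.ne_of_val_ne ((Nat.le_of_lt_succ l.2).trans_lt hji).ne')
    exact span_le_ker hv

end SingularValues

theorem singVal_succ_eq_singularValues {m k : ℕ} (A : Matrix (Fin m) (Fin k) ℝ) {j : ℕ}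
    (hj : j < k) : singVal A (j + 1) = (toEuclideanLin A).singularValues j := by
  set T := toEuclideanLin A
  have iInf_le (W : {W : Submodule ℝ (EuclideanSpace ℝ (Fin k)) // finrank ℝ W = j + 1}) :
      ⨅ v : {v // v ∈ W.1 ∧ ‖v‖ = 1}, ‖T v.1‖ ≤ T.singularValues j := by
    obtain ⟨v, hvW, norm_v, hv⟩ :=
      exists_mem_norm_eq_one_norm_apply_le_singularValues T (by rw [W.2]; exact j.lt_succ_self)
    exact ciInf_le_of_le ⟨0, Set.forall_mem_range.2 fun _ => norm_nonneg _⟩ ⟨v, hvW, norm_v⟩ hv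
  obtain ⟨W, finrank_W, hW⟩ :=
    exists_finrank_eq_forall_singularValues_mul_norm_le T (j := j) (by simpa using hj)
  have : Nonempty {W : Submodule ℝ (EuclideanSpace ℝ (Fin k)) // finrank ℝ W = j + 1} :=
    ⟨⟨W, finrank_W⟩⟩
  obtain ⟨v₀, hv₀W, norm_v₀, -⟩ :=
    exists_mem_norm_eq_one_norm_apply_le_singularValues T (by rw [finrank_W]; exact j.lt_succ_self)
  have : Nonempty {v // v ∈ W ∧ ‖v‖ = 1} := ⟨⟨v₀, hv₀W, norm_v₀⟩⟩
  refine le_antisymm (ciSup_le iInf_le)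
    (le_ciSup_of_le ⟨_, Set.forall_mem_range.2 iInf_le⟩ ⟨W, finrank_W⟩ (le_ciInf ?_))
  rintro ⟨v, hvW, norm_v⟩
  simpa [norm_v] using hW v hvW

theorem singVal_succ_eq_of_strictAnti {m n : ℕ} (A : Matrix (Fin m) (Fin n) ℝ) {σ : Fin n → ℝ}
    (hσ : StrictAnti σ) (σ_nonneg : ∀ k, 0 ≤ σ k) {v : Fin n → Fin n → ℝ} {w : Fin n → Fin m → ℝ}
    (v_ne : ∀ k, v k ≠ 0) (mulVec_v : ∀ k, A *ᵥ v k = σ k • w k)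
    (transpose_mulVec_w : ∀ k, Aᵀ *ᵥ w k = σ k • v k) (k : Fin n) :
    singVal A (k + 1) = σ k := by
  rw [singVal_succ_eq_singularValues A k.2]
  refine singularValues_eq_of_strictAnti (toEuclideanLin A) finrank_euclideanSpace_fin hσ σ_nonneg
    (v := fun k => WithLp.toLp 2 (v k)) (w := fun k => WithLp.toLp 2 (w k))
    (fun k => (WithLp.toLp_eq_zero 2).not.2 (v_ne k)) (fun k => ?_) (fun k => ?_) k
  · rw [toLpLin_toLp, toLin'_apply, mulVec_v]
    rfl
  · rw [← toEuclideanLin_conjTranspose_eq_adjoint, conjTranspose_eq_transpose_of_trivial,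
      toLpLin_toLp, toLin'_apply, transpose_mulVec_w]
    rfl

theorem sum_fin_ite_eq {M : Type*} [AddCommMonoid M] {m : ℕ} (f : ℕ → M) (n : ℕ) :
    (∑ i : Fin m, if n = i then f i else 0) = if n < m then f n else 0 := by
  rw [Fin.sum_univ_eq_sum_range (fun i => if n = i then f i else 0), Finset.sum_ite_eq]
  simp only [Finset.mem_range]

theorem inv_mulVec_eq_inv_smul {n K : Type*} [Fintype n] [DecidableEq n] [Field K]
    {A : Matrix n n K} (hA : IsUnit A.det) {c : K} (hc : c ≠ 0) {x y : n → K}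
    (h : A *ᵥ x = c • y) : A⁻¹ *ᵥ y = c⁻¹ • x := by
  rw [eq_inv_smul_iff₀ hc, ← mulVec_smul, ← h, mulVec_mulVec, nonsing_inv_mul A hA, one_mulVec]

section DifferenceMatrix

variable {m : ℕ}

theorem Dmat_apply_eq_sub (i j : Fin m) :
    Dmat m i j = (if (i : ℕ) = j then 1 else 0) - if (i : ℕ) = j + 1 then 1 else 0 := by
  simp only [Dmat, of_apply, Fin.ext_iff]
  grind

theorem isUnit_det_Dmat : IsUnit (Dmat m).det := by
  have isLowerTriangular : (Dmat m).IsLowerTriangular := fun i j (hij : (i : ℕ) < j) => by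
    rw [Dmat_apply_eq_sub, if_neg (by omega), if_neg (by omega), sub_zero]
  rw [det_of_isLowerTriangular _ isLowerTriangular]
  simp [Dmat_apply_eq_sub]

theorem Dmat_mulVec (f : ℕ → ℝ) (f_zero : f 0 = 0) :
    (Dmat m *ᵥ fun i => f (i + 1)) = fun i : Fin m => f (i + 1) - f i := by
  ext ⟨i, hi⟩
  simp only [mulVec, dotProduct, Dmat_apply_eq_sub, sub_mul, ite_mul, one_mul, zero_mul,
    Finset.sum_sub_distrib, sum_fin_ite_eq (fun i => f (i + 1)), if_pos hi]
  cases i with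
  | zero => simp [f_zero]
  | succ i => simp [sum_fin_ite_eq (fun i => f (i + 1)), (Nat.lt_succ_self i).trans hi]

theorem transpose_Dmat_mulVec (f : ℕ → ℝ) (f_last : f m = 0) :
    ((Dmat m)ᵀ *ᵥ fun i => f i) = fun i : Fin m => f i - f (i + 1) := by
  ext ⟨i, hi⟩
  simp only [mulVec, dotProduct, transpose_apply, Dmat_apply_eq_sub, sub_mul, ite_mul, one_mul,
    zero_mul, Finset.sum_sub_distrib, eq_comm (b := i), eq_comm (b := i + 1), sum_fin_ite_eq,
    if_pos hi]
  rcases (Nat.succ_le_of_lt hi).lt_or_eq with hi' | rfl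
  · rw [if_pos hi']
  · rw [if_neg (lt_irrefl _), f_last]

/-- A left singular vector of the difference matrix whenever `cos ((2m + 1)φ) = 0`; indexing by the
half-angle `φ` makes its singular value `2 sin φ`. -/
noncomputable def cosVec (m : ℕ) (φ : ℝ) : Fin m → ℝ := fun i => Real.cos ((2 * i + 1) * φ)

/-- The right singular vector of the difference matrix paired with `cosVec m φ`. -/
noncomputable def sinVec (m : ℕ) (φ : ℝ) : Fin m → ℝ := fun i => Real.sin (2 * (i + 1) * φ)

theorem Dmat_mulVec_sinVec (φ : ℝ) :
    Dmat m *ᵥ sinVec m φ = (2 * Real.sin φ) • cosVec m φ := by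
  have difference := Dmat_mulVec (m := m) (fun i => Real.sin (2 * i * φ)) (by simp)
  push_cast at difference
  unfold sinVec
  rw [difference]
  ext i
  rw [Real.sin_sub_sin, Pi.smul_apply, smul_eq_mul, cosVec]
  ring_nf

theorem transpose_Dmat_mulVec_cosVec {φ : ℝ} (hφ : Real.cos ((2 * m + 1) * φ) = 0) :
    (Dmat m)ᵀ *ᵥ cosVec m φ = (2 * Real.sin φ) • sinVec m φ := by
  unfold cosVec
  rw [transpose_Dmat_mulVec (fun i => Real.cos ((2 * i + 1) * φ)) hφ]
  ext i
  rw [← neg_sub, Real.cos_sub_cos, Pi.smul_apply, smul_eq_mul, sinVec]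
  push_cast
  ring_nf

theorem cosVec_ne_zero [NeZero m] {φ : ℝ} (hφ : Real.cos φ ≠ 0) : cosVec m φ ≠ 0 := fun h => by
  simpa [cosVec, hφ] using congrFun h 0

/-- The half-angle `φ` whose `(2 sin φ)⁻¹` is the `k`-th largest singular value of the inverse
difference matrix, counting from `k = 0`. -/
noncomputable def halfAngle (m k : ℕ) : ℝ :=
  Real.pi / 2 * ((k + 1 / 2) / (m + 1 / 2))

theorem halfAngle_pos (m k : ℕ) : 0 < halfAngle m k := by
  unfold halfAngle
  positivity

theorem halfAngle_lt_pi_div_two {k : ℕ} (hk : k < m) : halfAngle m k < Real.pi / 2 := by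
  have : (k : ℝ) < m := Nat.cast_lt.2 hk
  refine mul_lt_of_lt_one_right Real.pi_div_two_pos ((div_lt_one (by positivity)).2 ?_)
  gcongr

theorem halfAngle_strictMono (m : ℕ) : StrictMono (halfAngle m) := by
  intro k l hkl
  unfold halfAngle
  gcongr

theorem cos_two_mul_add_one_mul_halfAngle (m k : ℕ) :
    Real.cos ((2 * m + 1) * halfAngle m k) = 0 := by
  refine Real.cos_eq_zero_iff.2 ⟨k, ?_⟩
  unfold halfAngle
  push_cast
  field_simp

theorem sin_halfAngle_pos {k : ℕ} (hk : k < m) : 0 < Real.sin (halfAngle m k) :=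
  Real.sin_pos_of_pos_of_lt_pi (halfAngle_pos m k)
    ((halfAngle_lt_pi_div_two hk).trans (half_lt_self Real.pi_pos))

theorem cos_halfAngle_pos {k : ℕ} (hk : k < m) : 0 < Real.cos (halfAngle m k) :=
  Real.cos_pos_of_mem_Ioo
    ⟨(neg_neg_of_pos Real.pi_div_two_pos).trans (halfAngle_pos m k), halfAngle_lt_pi_div_two hk⟩

theorem inv_two_mul_sin_halfAngle_strictAnti (m : ℕ) :
    StrictAnti fun k : Fin m => (2 * Real.sin (halfAngle m k))⁻¹ := fun k l hkl => by
  have sin_lt : Real.sin (halfAngle m k) < Real.sin (halfAngle m l) :=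
    Real.sin_lt_sin_of_lt_of_le_pi_div_two
      ((neg_neg_of_pos Real.pi_div_two_pos).trans (halfAngle_pos m k)).le
      (halfAngle_lt_pi_div_two l.2).le (halfAngle_strictMono m hkl)
  exact inv_strictAnti₀ (mul_pos two_pos (sin_halfAngle_pos k.2))
    (mul_lt_mul_of_pos_left sin_lt two_pos)

theorem singVal_inv_Dmat {k : ℕ} (hk : k < m) :
    singVal (Dmat m)⁻¹ (k + 1) = (2 * Real.sin (halfAngle m k))⁻¹ := by
  have : NeZero m := NeZero.of_gt hk
  have two_mul_sin_pos (k : Fin m) : 0 < 2 * Real.sin (halfAngle m k) :=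
    mul_pos two_pos (sin_halfAngle_pos k.2)
  have mulVec_cosVec (k : Fin m) : (Dmat m)⁻¹ *ᵥ cosVec m (halfAngle m k) =
      (2 * Real.sin (halfAngle m k))⁻¹ • sinVec m (halfAngle m k) :=
    inv_mulVec_eq_inv_smul isUnit_det_Dmat (two_mul_sin_pos k).ne' (Dmat_mulVec_sinVec _)
  have transpose_mulVec_sinVec (k : Fin m) : ((Dmat m)⁻¹)ᵀ *ᵥ sinVec m (halfAngle m k) =
      (2 * Real.sin (halfAngle m k))⁻¹ • cosVec m (halfAngle m k) := by
    rw [transpose_nonsing_inv]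
    exact inv_mulVec_eq_inv_smul (isUnit_det_transpose _ isUnit_det_Dmat) (two_mul_sin_pos k).ne'
      (transpose_Dmat_mulVec_cosVec (cos_two_mul_add_one_mul_halfAngle m k))
  exact singVal_succ_eq_of_strictAnti _ (inv_two_mul_sin_halfAngle_strictAnti m)
    (fun k => (inv_pos.2 (two_mul_sin_pos k)).le)
    (fun k => cosVec_ne_zero (cos_halfAngle_pos k.2).ne') mulVec_cosVec transpose_mulVec_sinVec
    ⟨k, hk⟩

end DifferenceMatrix

/-- bounds on the singular values of D⁻¹. -/
theorem singVal_Dinv_bounds (m j : ℕ) (hj1 : 1 ≤ j) (hjm : j ≤ m) :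
    (1 / Real.pi) * (((m : ℝ) + 1 / 2) / ((j : ℝ) - 1 / 2)) ≤ singVal (Dmat m)⁻¹ j ∧
      singVal (Dmat m)⁻¹ j ≤ (1 / 2) * (((m : ℝ) + 1 / 2) / ((j : ℝ) - 1 / 2)) := by
  obtain ⟨k, rfl⟩ := Nat.exists_eq_add_of_le' hj1
  have sin_le : Real.sin (halfAngle m k) ≤ halfAngle m k := Real.sin_le (halfAngle_pos m k).le
  have le_sin : 2 / Real.pi * halfAngle m k ≤ Real.sin (halfAngle m k) :=
    Real.mul_le_sin (halfAngle_pos m k).le (halfAngle_lt_pi_div_two hjm).le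
  have index_eq : ((k + 1 : ℕ) : ℝ) - 1 / 2 = k + 1 / 2 := by push_cast; ring
  have lower_eq : 1 / Real.pi * ((m + 1 / 2) / (k + 1 / 2)) = (2 * halfAngle m k)⁻¹ := by
    unfold halfAngle
    field_simp
  have upper_eq : 1 / 2 * ((m + 1 / 2) / (k + 1 / 2)) = (2 * (2 / Real.pi * halfAngle m k))⁻¹ := by
    unfold halfAngle
    field_simp
  rw [singVal_inv_Dmat hjm, index_eq, lower_eq, upper_eq]
  have := sin_halfAngle_pos hjm
  have := halfAngle_pos m k
  constructor <;> gcongr
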